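/- Let k ∈ ℕ and let h be an integer with 1 ≤ h ≤ k. Then every k-nice set Q ⊆ ℤ² whose height is exactly h has at most γ_h · k + β_h elements. -/

import Mathlib

/-- A set `Q ⊆ ℤ²` is `k`-nice if every element is a nonzero coprime pair,
`Q` does not contain both a pair and its negation, and all cross determinants
are bounded by `k` in absolute value. -/
def IsKNice (k : ℕ) (Q : Set (ℤ × ℤ)) : Prop :=
  (∀ p ∈ Q, p ≠ (0, 0) ∧ Int.gcd p.1 p.2 = 1) ∧
  (∀ p ∈ Q, -p ∉ Q) ∧
  (∀ p ∈ Q, ∀ q ∈ Q, |p.1 * q.2 - q.1 * p.2| ≤ (k : ℤ))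

/-- `Q` is y-non-negative: all second coordinates are non-negative. -/
def YNonneg (Q : Set (ℤ × ℤ)) : Prop := ∀ p ∈ Q, 0 ≤ p.2

/-- The height of `Q` is at most `h`. -/
def HeightLe (Q : Set (ℤ × ℤ)) (h : ℕ) : Prop := ∀ p ∈ Q, |p.2| ≤ (h : ℤ)

/-- The height of `Q` is exactly `h`: the maximum of `|n|` over `(m, n) ∈ Q` is `h`. -/
def HeightEq (Q : Set (ℤ × ℤ)) (h : ℕ) : Prop :=
  HeightLe Q h ∧ ∃ p ∈ Q, |p.2| = (h : ℤ)

/-- `ρ_ℓ = ∏_{p prime, p ∣ ℓ} (1 - 1/p)`. -/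
noncomputable def rho (ℓ : ℕ) : ℝ :=
  ∏ p ∈ ℓ.primeFactors, (1 - 1 / (p : ℝ))

/-- `α_ℓ` is the maximum over `1 ≤ a ≤ b ≤ 2ℓ` of the number of integers in `[a, b]`
coprime with `ℓ` minus `ρ_ℓ (b - a + 1)`. -/
noncomputable def alpha (ℓ : ℕ) : ℝ :=
  sSup {x : ℝ | ∃ a b : ℤ, 1 ≤ a ∧ a ≤ b ∧ b ≤ 2 * (ℓ : ℤ) ∧
    x = ((Finset.filter (fun z => Int.gcd z (ℓ : ℤ) = 1) (Finset.Icc a b)).card : ℝ)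
      - rho ℓ * ((b : ℝ) - (a : ℝ) + 1)}

/-- `γ_ℓ` is the optimal value of the linear program `LP_ℓ`. -/
noncomputable def gamma (ℓ : ℕ) : ℝ :=
  sSup {x : ℝ | ∃ σ τ : ℕ → ℝ,
    (∀ i, 1 ≤ i → i ≤ ℓ → 0 ≤ σ i ∧ σ i ≤ τ i) ∧
    (∀ i j, 1 ≤ i → i ≤ ℓ → 1 ≤ j → j ≤ ℓ →
      -1 ≤ (i : ℝ) * τ j - (j : ℝ) * σ i ∧ (i : ℝ) * τ j - (j : ℝ) * σ i ≤ 1) ∧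
    x = ∑ i ∈ Finset.Icc 1 ℓ, rho i * (τ i - σ i)}

/-- `β_0 = 1` and `β_ℓ = β_{ℓ-1} + α_ℓ + ρ_ℓ`. -/
noncomputable def beta : ℕ → ℝ
  | 0 => 1
  | n + 1 => beta n + alpha (n + 1) + rho (n + 1)

lemma rho_nonneg (l : ℕ) : 0 ≤ rho l := by
  unfold rho
  apply Finset.prod_nonneg
  intro p hp
  have h1 : (1 : ℝ) ≤ p := by exact_mod_cast (Nat.prime_of_mem_primeFactors hp).one_lt.le
  have : 1 / (p : ℝ) ≤ 1 := by
    rw [div_le_one (by linarith)]; exact h1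
  linarith

lemma totient_eq_rho (l : ℕ) : (Nat.totient l : ℝ) = l * rho l := by
  have h := Nat.totient_eq_mul_prod_factors l
  have h2 : ((Nat.totient l : ℚ) : ℝ) = ((l * ∏ p ∈ l.primeFactors, (1 - (p : ℚ)⁻¹) : ℚ) : ℝ) := by
    rw [h]
  push_cast at h2
  rw [h2, rho]
  simp only [one_div]

/-- Number of integers in `[a,b]` coprime to `l`. -/
noncomputable def cnt (l : ℕ) (a b : ℤ) : ℕ :=
  (Finset.filter (fun z => Int.gcd z (l : ℤ) = 1) (Finset.Icc a b)).card

lemma cnt_shift (l : ℕ) (a b t : ℤ) : cnt l (a + t * l) (b + t * l) = cnt l a b := by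
  unfold cnt
  symm
  apply Finset.card_bij (fun z _ => z + t * l)
  · intro z hz
    simp only [Finset.mem_filter, Finset.mem_Icc] at hz ⊢
    refine ⟨⟨by linarith [hz.1.1], by linarith [hz.1.2]⟩, ?_⟩
    rw [Int.gcd_add_mul_right_left]
    exact hz.2
  · intro x _ y _ h
    linarith
  · intro z hz
    simp only [Finset.mem_filter, Finset.mem_Icc] at hz
    refine ⟨z - t * l, ?_, by ring⟩
    simp only [Finset.mem_filter, Finset.mem_Icc]
    refine ⟨⟨by linarith [hz.1.1], by linarith [hz.1.2]⟩, ?_⟩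
    have := Int.gcd_add_mul_right_left (l : ℤ) (z - t * l) t
    rw [sub_add_cancel] at this
    rw [← this]
    exact hz.2

lemma cnt_period (l n : ℕ) : cnt l (n : ℤ) (n + l - 1) = Nat.totient l := by
  rw [← Nat.filter_coprime_Ico_eq_totient l n]
  unfold cnt
  symm
  apply Finset.card_bij (fun (z : ℕ) _ => (z : ℤ))
  · intro z hz
    simp only [Finset.mem_filter, Finset.mem_Icc, Finset.mem_Ico] at hz ⊢
    refine ⟨by omega, ?_⟩
    rw [Int.gcd_natCast_natCast]
    exact hz.2.symm
  · intro x _ y _ h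
    exact_mod_cast h
  · intro z hz
    simp only [Finset.mem_filter, Finset.mem_Icc] at hz
    obtain ⟨m, rfl⟩ := Int.eq_ofNat_of_zero_le (a := z) (by omega)
    refine ⟨m, ?_, rfl⟩
    simp only [Finset.mem_filter, Finset.mem_Ico]
    refine ⟨by omega, ?_⟩
    rw [Int.gcd_natCast_natCast] at hz
    exact Nat.Coprime.symm hz.2

lemma cnt_split (l : ℕ) (a c b : ℤ) (h1 : a ≤ c + 1) (h2 : c ≤ b) :
    cnt l a b = cnt l a c + cnt l (c + 1) b := by
  unfold cnt
  rw [← Finset.card_union_of_disjoint, ← Finset.filter_union]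
  · congr 2
    ext z
    simp only [Finset.mem_union, Finset.mem_Icc]
    omega
  · rw [Finset.disjoint_left]
    intro z hz hz'
    simp only [Finset.mem_filter, Finset.mem_Icc] at hz hz'
    omega

lemma cnt_le_small (l : ℕ) (a b : ℤ) (h1 : 1 ≤ a) (h2 : a ≤ b) (h3 : b ≤ 2 * (l : ℤ)) :
    (cnt l a b : ℝ) - rho l * ((b : ℝ) - a + 1) ≤ alpha l := by
  unfold alpha
  apply le_csSup
  · refine ⟨2 * l, ?_⟩
    rintro x ⟨a, b, h1, h2, h3, rfl⟩
    have hc : (Finset.filter (fun z => Int.gcd z (l : ℤ) = 1) (Finset.Icc a b)).card ≤ 2 * l := by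
      refine (Finset.card_filter_le _ _).trans ?_
      rw [Int.card_Icc]
      omega
    have hc' : ((Finset.filter (fun z => Int.gcd z (l : ℤ) = 1) (Finset.Icc a b)).card : ℝ)
        ≤ 2 * l := by exact_mod_cast hc
    have hab : (a : ℝ) ≤ b := by exact_mod_cast h2
    have := mul_nonneg (rho_nonneg l) (by linarith : (0 : ℝ) ≤ (b : ℝ) - a + 1)
    linarith
  · exact ⟨a, b, h1, h2, h3, rfl⟩

lemma alpha_nonneg (l : ℕ) (hl : 1 ≤ l) : 0 ≤ alpha l := by
  have h := cnt_le_small l 1 l le_rfl (by omega) (by omega)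
  have h2 := cnt_period l 1
  have h3 : ((1 : ℕ) : ℤ) + l - 1 = l := by push_cast; ring
  rw [h3] at h2
  push_cast at h2
  rw [h2, totient_eq_rho] at h
  push_cast at h
  linarith

lemma cnt_le_aux (l : ℕ) (hl : 1 ≤ l) (a : ℤ) (h1 : 1 ≤ a) (h1' : a ≤ l) (n : ℕ) :
    (cnt l a (a + n) : ℝ) ≤ alpha l + rho l * ((n : ℝ) + 1) := by
  induction n using Nat.strong_induction_on with
  | _ n ih =>
    by_cases hb : a + n ≤ 2 * (l : ℤ)
    · have h := cnt_le_small l a (a + n) h1 (by omega) hb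
      push_cast at h
      have e : (a : ℝ) + n - a + 1 = n + 1 := by ring
      rw [e] at h
      linarith
    · obtain ⟨m, rfl⟩ : ∃ m, n = m + l := ⟨n - l, by omega⟩
      have h := ih m (by omega)
      rw [cnt_split l a (a + m) _ (by omega) (by push_cast; omega)]
      obtain ⟨q, hq⟩ := Int.eq_ofNat_of_zero_le (a := a + m + 1) (by omega)
      have e : a + ((m + l : ℕ) : ℤ) = (q : ℤ) + l - 1 := by push_cast; omega
      have hp := cnt_period l q
      rw [e, hq, hp]
      push_cast
      rw [totient_eq_rho]
      linarith

lemma cnt_le (l : ℕ) (hl : 1 ≤ l) (a b : ℤ) (hab : a ≤ b) :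
    (cnt l a b : ℝ) ≤ alpha l + rho l * ((b : ℝ) - a + 1) := by
  set t := (a - 1) / (l : ℤ) with ht
  have hl' : (0 : ℤ) < l := by omega
  have e1 := Int.emod_add_mul_ediv (a - 1) l
  have e2 := Int.emod_nonneg (a - 1) hl'.ne'
  have e3 := Int.emod_lt_of_pos (a - 1) hl'
  rw [← ht] at e1
  obtain ⟨n, hn⟩ := Int.eq_ofNat_of_zero_le (a := b - a) (by omega)
  have hs := cnt_shift l (a - t * l) (b - t * l) t
  rw [sub_add_cancel, sub_add_cancel] at hs
  have h := cnt_le_aux l hl (a - t * l) (by linarith) (by linarith) n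
  have e : a - t * l + n = b - t * l := by linarith
  rw [e, ← hs] at h
  have hn' : (b : ℝ) - a = n := by exact_mod_cast hn
  rw [hn']
  exact h

lemma beta_eq (h : ℕ) : beta h = 1 + ∑ i ∈ Finset.Icc 1 h, (alpha i + rho i) := by
  induction h with
  | zero => simp [beta]
  | succ n ih =>
    rw [beta, ih, Finset.sum_Icc_succ_top (by omega)]
    ring

lemma lp_le (h k : ℕ) (hk : 1 ≤ k) (s t : ℕ → ℝ)
    (hst : ∀ i, 1 ≤ i → i ≤ h → s i ≤ t i)
    (hd : ∀ i j : ℕ, 1 ≤ i → i ≤ h → 1 ≤ j → j ≤ h → |(i : ℝ) * t j - j * s i| ≤ k) :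
    ∑ i ∈ Finset.Icc 1 h, rho i * (t i - s i) ≤ gamma h * k := by
  have hk' : (0 : ℝ) < k := by exact_mod_cast hk
  rw [← div_le_iff₀ hk']
  unfold gamma
  apply le_csSup
  · refine ⟨∑ i ∈ Finset.Icc 1 h, rho i, ?_⟩
    rintro x ⟨σ, τ, h1, h2, rfl⟩
    apply Finset.sum_le_sum
    intro i hi
    rw [Finset.mem_Icc] at hi
    have h3 := (h2 i i hi.1 hi.2 hi.1 hi.2).2
    have h4 := (h1 i hi.1 hi.2).2
    have h5 : (1 : ℝ) ≤ i := by exact_mod_cast hi.1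
    have h6 : τ i - σ i ≤ 1 := by nlinarith
    nlinarith [rho_nonneg i]
  · set C : ℝ := ∑ i ∈ Finset.Icc 1 h, |s i / k| with hC
    refine ⟨fun i => s i / k + C * i, fun i => t i / k + C * i, ?_, ?_, ?_⟩
    · intro i hi hi'
      have h1 : |s i / k| ≤ C := Finset.single_le_sum (f := fun i => |s i / (k : ℝ)|)
        (fun j _ => abs_nonneg _) (Finset.mem_Icc.2 ⟨hi, hi'⟩)
      have h5 : (1 : ℝ) ≤ i := by exact_mod_cast hi
      have h6 := neg_abs_le (s i / k)
      have h7 := abs_nonneg (s i / k)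
      refine ⟨by nlinarith, ?_⟩
      have : s i / k ≤ t i / k := div_le_div_of_nonneg_right (hst i hi hi') hk'.le
      simpa using this
    · intro i j hi hi' hj hj'
      have h1 := hd i j hi hi' hj hj'
      have e : (i : ℝ) * (t j / k + C * j) - j * (s i / k + C * i) = (i * t j - j * s i) / k := by
        ring
      simp only []
      rw [e, ← abs_le, abs_div, abs_of_pos hk', div_le_one hk']
      exact h1
    · rw [Finset.sum_div]
      apply Finset.sum_congr rfl
      intro i _
      ring

/-- real points in the hull of `Q` -/
def Good (Q : Finset (ℤ × ℤ)) (x : ℝ) (i : ℕ) : Prop :=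
  ∃ p ∈ Q, ∃ c : ℝ, 0 ≤ c ∧ c ≤ 1 ∧ x = c * p.1 ∧ (i : ℝ) = c * p.2

lemma main_aux (k h : ℕ) (hh1 : 1 ≤ h) (hk : 1 ≤ k) (Q : Finset (ℤ × ℤ))
    (hg : ∀ p ∈ Q, Int.gcd p.1 p.2 = 1)
    (hd : ∀ p ∈ Q, ∀ q ∈ Q, |p.1 * q.2 - q.1 * p.2| ≤ (k : ℤ))
    (hy : ∀ p ∈ Q, 0 ≤ p.2 ∧ p.2 ≤ h) (htop : ∃ p ∈ Q, p.2 = (h : ℤ))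
    (h0 : (Q.filter (fun p => p.2 = 0)).card ≤ 1) :
    (Q.card : ℝ) ≤ gamma h * k + beta h := by
  have key : ∀ i : ℕ, ∃ s t : ℝ, 1 ≤ i → i ≤ h → s ≤ t ∧ Good Q s i ∧ Good Q t i ∧
      ((Q.filter (fun p => p.2 = (i : ℤ))).card : ℝ) ≤ rho i * (t - s) + (alpha i + rho i) := by
    intro i
    by_cases hi : 1 ≤ i ∧ i ≤ h
    swap
    · exact ⟨0, 0, fun a b => absurd ⟨a, b⟩ hi⟩
    obtain ⟨hi, hi'⟩ := hi
    rcases (Q.filter (fun p => p.2 = (i : ℤ))).eq_empty_or_nonempty with he | hne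
    · obtain ⟨p, hp, hp2⟩ := htop
      have hpos : (0 : ℝ) < h := by exact_mod_cast hh1
      have hG : Good Q ((i / h : ℝ) * p.1) i := by
        refine ⟨p, hp, (i / h : ℝ), by positivity, ?_, rfl, ?_⟩
        · rw [div_le_one hpos]; exact_mod_cast hi'
        · rw [hp2]; push_cast; field_simp
      refine ⟨_, _, fun _ _ => ⟨le_rfl, hG, hG, ?_⟩⟩
      rw [he]
      have := alpha_nonneg i hi
      have := rho_nonneg i
      simp
      linarith
    · obtain ⟨p, hp, hpm⟩ := Finset.exists_min_image _ (fun p : ℤ × ℤ => p.1) hne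
      obtain ⟨q, hq, hqm⟩ := Finset.exists_max_image _ (fun p : ℤ × ℤ => p.1) hne
      have hpq := hpm q hq
      have hG : ∀ p ∈ Q.filter (fun p => p.2 = (i : ℤ)), Good Q (p.1 : ℝ) i := by
        intro p hp
        rw [Finset.mem_filter] at hp
        exact ⟨p, hp.1, 1, by norm_num, le_rfl, by simp, by rw [hp.2]; simp⟩
      refine ⟨p.1, q.1, fun _ _ => ⟨by exact_mod_cast hpq, hG p hp, hG q hq, ?_⟩⟩
      have hc : (Q.filter (fun p => p.2 = (i : ℤ))).card ≤ cnt i p.1 q.1 := by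
        apply Finset.card_le_card_of_injOn (fun p => p.1)
        · intro r hr
          have hr' := Finset.mem_filter.1 hr
          simp only [Finset.coe_filter, Set.mem_ofPred_eq, Finset.mem_Icc]
          refine ⟨⟨hpm r hr, hqm r hr⟩, ?_⟩
          rw [← hr'.2]
          exact hg r hr'.1
        · intro r hr r' hr' e
          have hr := (Finset.mem_filter.1 hr).2
          have hr' := (Finset.mem_filter.1 hr').2
          exact Prod.ext e (hr.trans hr'.symm)
      have hc2 := cnt_le i hi p.1 q.1 hpq
      have hc' : ((Q.filter (fun p => p.2 = (i : ℤ))).card : ℝ) ≤ cnt i p.1 q.1 := by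
        exact_mod_cast hc
      linarith
  choose s t hst using key
  have hsum : (Q.card : ℝ) = ∑ i ∈ Finset.range (h + 1),
      ((Q.filter (fun p => p.2 = (i : ℤ))).card : ℝ) := by
    rw [Finset.card_eq_sum_card_fiberwise (f := fun p => p.2.toNat) (t := Finset.range (h + 1))]
    · push_cast
      apply Finset.sum_congr rfl
      intro i _
      congr 2
      apply Finset.filter_congr
      intro p hp
      have := hy p hp
      omega
    · intro p hp
      have := hy p hp
      simp only [Finset.coe_range, Set.mem_Iio]
      omega
  have hlp := lp_le h k hk s t (fun i a b => (hst i a b).1) (by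
    intro i j hi hi' hj hj'
    obtain ⟨p, hp, c, c0, c1, e1, e2⟩ := (hst i hi hi').2.1
    obtain ⟨q, hq, d, d0, d1, e3, e4⟩ := (hst j hj hj').2.2.1
    have hpq : |(q.1 : ℝ) * p.2 - p.1 * q.2| ≤ k := by exact_mod_cast hd q hq p hp
    rw [e1, e2, e3, e4]
    have e : c * (p.2 : ℝ) * (d * q.1) - d * q.2 * (c * p.1)
        = (c * d) * (q.1 * p.2 - p.1 * q.2) := by ring
    rw [e, abs_mul, abs_of_nonneg (mul_nonneg c0 d0)]
    have : c * d ≤ 1 := by nlinarith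
    nlinarith [abs_nonneg ((q.1 : ℝ) * p.2 - p.1 * q.2), mul_nonneg c0 d0])
  have h0' : ((Q.filter (fun p => p.2 = ((0 : ℕ) : ℤ))).card : ℝ) ≤ 1 := by
    exact_mod_cast h0
  have hr : Finset.range (h + 1) = insert 0 (Finset.Icc 1 h) := by
    ext x
    simp only [Finset.mem_range, Finset.mem_insert, Finset.mem_Icc]
    omega
  rw [hsum, hr, Finset.sum_insert (by simp), beta_eq]
  have hle := Finset.sum_le_sum (s := Finset.Icc 1 h) (fun i hi =>
    (hst i (Finset.mem_Icc.1 hi).1 (Finset.mem_Icc.1 hi).2).2.2.2)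
  rw [Finset.sum_add_distrib] at hle
  linarith

theorem kNice_height_card_le_gamma_mul_add_beta (k h : ℕ) (hh1 : 1 ≤ h)
    (hhk : h ≤ k) (Q : Set (ℤ × ℤ)) (hQ : IsKNice k Q) (hht : HeightEq Q h) :
    Q.Finite ∧ (Q.ncard : ℝ) ≤ gamma h * k + beta h := by
  obtain ⟨hg, hneg, hd⟩ := hQ
  obtain ⟨hle, p0, hp0, hp0h⟩ := hht
  have hfin : Q.Finite := by
    apply Set.Finite.subset (Set.Finite.prod
      (Set.finite_Icc (-((k : ℤ) + |p0.1|)) ((k : ℤ) + |p0.1|)) (Set.finite_Icc (-(h : ℤ)) h))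
    intro p hp
    have h1 := hd p hp p0 hp0
    have h2 := hle p hp
    refine ⟨?_, abs_le.1 h2⟩
    apply abs_le.1
    have h3 : |p.1 * p0.2| ≤ k + |p0.1 * p.2| := by
      have := abs_add_le (p.1 * p0.2 - p0.1 * p.2) (p0.1 * p.2)
      rw [sub_add_cancel] at this
      linarith
    rw [abs_mul, abs_mul, hp0h] at h3
    have h4 := abs_nonneg p0.1
    have h5 : (1 : ℤ) ≤ h := by exact_mod_cast hh1
    have h6 : |p.1| * h ≤ (k + |p0.1|) * h := by nlinarith
    exact le_of_mul_le_mul_right h6 (by linarith)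
  refine ⟨hfin, ?_⟩
  classical
  set f : ℤ × ℤ → ℤ × ℤ := fun p => if p.2 < 0 then -p else p with hf
  have hfc : ∀ p, (f p = p ∧ 0 ≤ p.2) ∨ (f p = -p ∧ p.2 < 0) := by
    intro p
    by_cases hp : p.2 < 0
    · right; exact ⟨by simp [hf, hp], hp⟩
    · left; exact ⟨by simp [hf, hp], not_lt.1 hp⟩
  have hinj : Set.InjOn f Q := by
    intro p hp q hq e
    rcases hfc p with ⟨a, _⟩ | ⟨a, _⟩ <;> rcases hfc q with ⟨b, _⟩ | ⟨b, _⟩ <;> rw [a, b] at e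
    · exact e
    · exact absurd (e ▸ hp) (hneg q hq)
    · exact absurd (e ▸ hq) (hneg p hp)
    · exact neg_injective e
  have hcard : Q.ncard = (hfin.toFinset.image f).card := by
    rw [Finset.card_image_of_injOn (by simpa using hinj), Set.ncard_eq_toFinset_card Q hfin]
  rw [hcard]
  apply main_aux k h hh1 (hh1.trans hhk)
  · intro p hp
    obtain ⟨q, hq, rfl⟩ := Finset.mem_image.1 hp
    have := (hg q (by simpa using hq)).2
    rcases hfc q with ⟨a, _⟩ | ⟨a, _⟩ <;> rw [a]
    · exact this
    · simpa using this
  · intro p hp p' hp'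
    obtain ⟨q, hq, rfl⟩ := Finset.mem_image.1 hp
    obtain ⟨q', hq', rfl⟩ := Finset.mem_image.1 hp'
    have h1 := hd q (by simpa using hq) q' (by simpa using hq')
    rw [abs_le] at h1 ⊢
    rcases hfc q with ⟨a, _⟩ | ⟨a, _⟩ <;> rcases hfc q' with ⟨b, _⟩ | ⟨b, _⟩ <;> rw [a, b] <;>
      (try simp only [Prod.fst_neg, Prod.snd_neg]) <;> constructor <;> linarith
  · intro p hp
    obtain ⟨q, hq, rfl⟩ := Finset.mem_image.1 hp
    have h1 := abs_le.1 (hle q (by simpa using hq))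
    rcases hfc q with ⟨a, _⟩ | ⟨a, _⟩ <;> rw [a] <;>
      (try simp only [Prod.snd_neg]) <;> constructor <;> linarith
  · refine ⟨f p0, Finset.mem_image_of_mem _ (by simpa using hp0), ?_⟩
    rcases hfc p0 with ⟨a, b⟩ | ⟨a, b⟩ <;> rw [a]
    · rwa [abs_of_nonneg b] at hp0h
    · rwa [abs_of_neg b] at hp0h
  · rw [Finset.card_le_one]
    have hz : ∀ p ∈ (hfin.toFinset.image f).filter (fun p => p.2 = 0),
        p ∈ Q ∧ p.2 = 0 ∧ (p.1 = 1 ∨ p.1 = -1) := by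
      intro p hp
      obtain ⟨hp, hp2⟩ := Finset.mem_filter.1 hp
      obtain ⟨q, hq, rfl⟩ := Finset.mem_image.1 hp
      have hq : q ∈ Q := by simpa using hq
      rcases hfc q with ⟨a, b⟩ | ⟨a, b⟩ <;> rw [a] at hp2 ⊢
      · refine ⟨hq, hp2, ?_⟩
        have := (hg q hq).2
        rw [hp2, Int.gcd_zero_right] at this
        omega
      · simp only [Prod.snd_neg] at hp2
        omega
    intro p hp q hq
    obtain ⟨a1, a2, a3⟩ := hz p hp
    obtain ⟨b1, b2, b3⟩ := hz q hq
    by_cases e : p.1 = q.1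
    · exact Prod.ext e (a2.trans b2.symm)
    · exfalso
      apply hneg p a1
      have : -p = q := by
        apply Prod.ext
        · simp only [Prod.fst_neg]; omega
        · simp only [Prod.snd_neg]; omega
      rwa [this]
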